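/- Let X = ℓ∞ⁿ and let Y be a two-dimensional real normed linear space. Let T : X → Y be a bounded linear operator with ‖T‖ = 1 such that Ext(B_X) ⊆ M_T. Suppose the set S = {x ∈ Ext(B_X) : Tx is not smooth} is nonempty and the maximal number of linearly independent vectors in S is k (i.e., dim span S = k). Then T is (n+k)-smooth, i.e., dim span J(T) = n + k. -/

import Mathlib

open Metric Set Module

/-- `J x` is the set of supporting functionals of `x`. -/
def suppFunctionals {E : Type*} [NormedAddCommGroup E] [NormedSpace ℝ E] (x : E) :
    Set (E →L[ℝ] ℝ) := {f | ‖f‖ = 1 ∧ f x = 1}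

/-- A point is smooth if it has a unique supporting functional. -/
def IsSmoothPoint {E : Type*} [NormedAddCommGroup E] [NormedSpace ℝ E] (x : E) : Prop :=
  ∃ g, suppFunctionals x = {g}

/-!
Every `F ∈ J(T)` extends, along the isometric embedding of `L(X, Y)` into `Y ^ Ext(B_X)`, to a
supporting functional of the family `(T x)`, whose coordinates are supporting functionals of the
`T x` up to scaling. So `J(T)` spans the sum of the spaces `span J(T x) ⊗ x`, `x ∈ Ext(B_X)`.
If `Y` is two-dimensional, `span J(T x)` is the whole dual when `T x` is not smooth. It remains to
find a single `g` spanning `span J(T x)` for all `x` with `T x` smooth, because then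
`span J(T) = g ⊗ X ⊕ h ⊗ span S` for any `h` independent of `g`.

For `X = ℓ∞ⁿ`, a generic vector `c` of `ker T` is nonzero in every coordinate that does not factor
through `T`. A functional supporting `T (sign c)` vanishes on `T eᵢ` for all these `i`. If only one
coordinate factors through `T`, this functional is the desired `g`; if two do, then `T` is
determined by them, so the images of the extreme points form two antipodal pairs, one of which is
not smooth, and `g` supports the other.
-/

section SupportingFunctionals

variable {E F : Type*} [NormedAddCommGroup E] [NormedSpace ℝ E] [NormedAddCommGroup F]
  [NormedSpace ℝ F]

lemma suppFunctionals_nonempty {y : E} (hy : ‖y‖ = 1) : (suppFunctionals y).Nonempty := by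
  obtain ⟨g, hg, hgy⟩ := exists_dual_vector ℝ y (by simp [hy])
  exact ⟨g, hg, by simp [hgy, hy]⟩

lemma neg_mem_suppFunctionals_iff {g : E →L[ℝ] ℝ} {y : E} :
    -g ∈ suppFunctionals y ↔ g ∈ suppFunctionals (-y) := by
  simp [suppFunctionals]

lemma suppFunctionals_neg (y : E) : suppFunctionals (-y) = -suppFunctionals y := by
  ext g
  rw [Set.mem_neg, neg_mem_suppFunctionals_iff]

lemma span_suppFunctionals_neg (y : E) :
    Submodule.span ℝ (suppFunctionals (-y)) = Submodule.span ℝ (suppFunctionals y) := by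
  rw [suppFunctionals_neg, Submodule.span_neg]

lemma IsSmoothPoint.neg {y : E} (hy : IsSmoothPoint y) : IsSmoothPoint (-y) := by
  obtain ⟨g, hg⟩ := hy
  exact ⟨-g, by rw [suppFunctionals_neg, hg, Set.neg_singleton]⟩

lemma comp_mem_suppFunctionals {A : E →L[ℝ] F} (hA : ‖A‖ ≤ 1) {x : E} (hx : ‖x‖ ≤ 1)
    {f : F →L[ℝ] ℝ} (hf : f ∈ suppFunctionals (A x)) : f.comp A ∈ suppFunctionals x := by
  refine ⟨le_antisymm ?_ ?_, hf.2⟩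
  · calc ‖f.comp A‖ ≤ ‖f‖ * ‖A‖ := f.opNorm_comp_le A
      _ ≤ 1 := by rw [hf.1, one_mul]; exact hA
  · calc (1 : ℝ) = ‖f.comp A x‖ := by simp [hf.2]
      _ ≤ ‖f.comp A‖ := (f.comp A).unit_le_opNorm x hx

lemma mem_span_suppFunctionals_of_apply_eq_norm {f : E →L[ℝ] ℝ} {y : E} (hf : f y = ‖f‖) :
    f ∈ Submodule.span ℝ (suppFunctionals y) := by
  obtain rfl | hf0 := eq_or_ne f 0
  · exact zero_mem _
  have hnorm : ‖f‖ ≠ 0 := norm_ne_zero_iff.2 hf0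
  have hmem : ‖f‖⁻¹ • f ∈ suppFunctionals y :=
    ⟨by simp [norm_smul, hnorm], by simp [hf, hnorm]⟩
  rw [← smul_inv_smul₀ hnorm f]
  exact Submodule.smul_mem _ _ (Submodule.subset_span hmem)

lemma IsSmoothPoint.span_suppFunctionals_eq {y : E} (hy : IsSmoothPoint y) {g : E →L[ℝ] ℝ}
    (hg : ‖g‖ = 1) (hgy : |g y| = 1) :
    Submodule.span ℝ (suppFunctionals y) = Submodule.span ℝ {g} := by
  obtain ⟨f, hf⟩ := hy
  rw [hf]
  obtain h | h := eq_or_eq_neg_of_abs_eq hgy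
  · have hmem : g ∈ suppFunctionals y := ⟨hg, h⟩
    rw [hf, Set.mem_singleton_iff] at hmem
    rw [hmem]
  · have hmem : -g ∈ suppFunctionals y := ⟨by rwa [norm_neg], by simp [h]⟩
    rw [hf, Set.mem_singleton_iff] at hmem
    rw [← hmem, ← Set.neg_singleton, Submodule.span_neg]

lemma finrank_continuousDual [FiniteDimensional ℝ E] : finrank ℝ (E →L[ℝ] ℝ) = finrank ℝ E :=
  LinearMap.toContinuousLinearMap.finrank_eq.symm.trans Subspace.dual_finrank_eq

lemma span_suppFunctionals_eq_top_of_not_isSmoothPoint (hE : finrank ℝ E = 2) {y : E}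
    (hy : ‖y‖ = 1) (hns : ¬ IsSmoothPoint y) :
    Submodule.span ℝ (suppFunctionals y) = ⊤ := by
  have : FiniteDimensional ℝ E := finite_of_finrank_eq_succ hE
  obtain ⟨f, hf⟩ := suppFunctionals_nonempty hy
  obtain ⟨f', hf', hne⟩ : ∃ f' ∈ suppFunctionals y, f' ≠ f := by
    by_contra! huniq
    exact hns ⟨f, Set.eq_singleton_iff_unique_mem.2 ⟨hf, huniq⟩⟩
  have hindep : LinearIndependent ℝ ![f, f'] := by
    refine (LinearIndependent.pair_iff' ?_).2 fun a ha => hne ?_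
    · rintro rfl
      simpa using hf.1
    · have ha1 : a = 1 := by simpa [hf.2, hf'.2] using DFunLike.congr_fun ha y
      rw [← ha, ha1, one_smul]
  rw [eq_top_iff, ← hindep.span_eq_top_of_card_eq_finrank (by simp [finrank_continuousDual, hE])]
  refine Submodule.span_mono ?_
  rw [Matrix.range_cons_cons_empty]
  exact Set.pair_subset hf hf'

lemma exists_mem_suppFunctionals_comp_eq (e : E →ₗᵢ[ℝ] F) {v : E} {f : E →L[ℝ] ℝ}
    (hf : f ∈ suppFunctionals v) :
    ∃ G ∈ suppFunctionals (e v), G.comp e.toContinuousLinearMap = f := by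
  let e' := e.equivRange
  obtain ⟨G, hG, hGnorm⟩ := exists_extension_norm_eq (𝕜 := ℝ) (LinearMap.range e.toLinearMap)
    (f.comp (e'.symm.toContinuousLinearEquiv : _ →L[ℝ] E))
  have hGe : ∀ u, G (e u) = f u := fun u =>
    (hG (e' u)).trans (by simp)
  refine ⟨G, ⟨?_, (hGe v).trans hf.2⟩, ContinuousLinearMap.ext hGe⟩
  rw [hGnorm, ← hf.1]
  exact f.opNorm_comp_linearIsometryEquiv e'.symm

lemma apply_single_eq_norm_of_mem_suppFunctionals {ι : Type*} [Fintype ι] [DecidableEq ι]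
    {V : ι → Type*} [∀ i, NormedAddCommGroup (V i)] [∀ i, NormedSpace ℝ (V i)] {u : ∀ i, V i}
    (hu : ‖u‖ ≤ 1) {G : (∀ i, V i) →L[ℝ] ℝ} (hG : G ∈ suppFunctionals u) (i : ι) :
    G (Pi.single i (u i)) = ‖G.comp (ContinuousLinearMap.single ℝ V i)‖ := by
  -- Replacing the `i`-th coordinate of `u` by `y` stays in the unit ball, where `G ≤ 1 = G u`.
  have hmax : ∀ y, ‖y‖ ≤ 1 → G (Pi.single i y) ≤ G (Pi.single i (u i)) := by
    intro y hy
    have hball : ‖u + Pi.single i (y - u i)‖ ≤ 1 := by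
      refine (pi_norm_le_iff_of_nonneg zero_le_one).2 fun j => ?_
      obtain rfl | hj := eq_or_ne j i
      · simpa using hy
      · simpa [hj] using (norm_le_pi_norm u j).trans hu
    have hle : G (u + Pi.single i (y - u i)) ≤ 1 :=
      ((le_abs_self _).trans (G.unit_le_opNorm _ hball)).trans_eq hG.1
    rw [map_add, hG.2, Pi.single_sub, map_sub] at hle
    linarith
  refine le_antisymm ?_ ?_
  · exact (le_abs_self _).trans <|
      (G.comp (ContinuousLinearMap.single ℝ V i)).unit_le_opNorm (u i)
        ((norm_le_pi_norm u i).trans hu)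
  · refine ContinuousLinearMap.opNorm_le_of_unit_norm (by simpa using hmax 0) fun y hy => ?_
    have hneg := hmax (-y) (by simp [hy])
    rw [Pi.single_neg, map_neg] at hneg
    exact abs_le.2 ⟨by simpa using neg_le.1 hneg, hmax y hy.le⟩

end SupportingFunctionals

section ExtremePoints

variable {X Y : Type*} [NormedAddCommGroup X] [NormedSpace ℝ X] [NormedAddCommGroup Y]
  [NormedSpace ℝ Y]

lemma norm_le_one_of_mem_extremePoints_closedBall {x : X}
    (hx : x ∈ extremePoints ℝ (closedBall (0 : X) 1)) : ‖x‖ ≤ 1 :=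
  mem_closedBall_zero_iff.1 (extremePoints_subset hx)

variable [FiniteDimensional ℝ X]

lemma closedBall_subset_of_extremePoints_subset {s : Set X} (hconv : Convex ℝ s)
    (hclosed : IsClosed s) (hs : extremePoints ℝ (closedBall (0 : X) 1) ⊆ s) :
    closedBall (0 : X) 1 ⊆ s := by
  have := FiniteDimensional.proper ℝ X
  rw [← closure_convexHull_extremePoints (isCompact_closedBall (0 : X) 1)
    (convex_closedBall 0 1)]
  exact closure_minimal (convexHull_min hs hconv) hclosed

lemma span_extremePoints_closedBall :
    Submodule.span ℝ (extremePoints ℝ (closedBall (0 : X) 1)) = ⊤ := by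
  refine Submodule.eq_top_of_nonempty_interior' _ ⟨0, mem_interior_iff_mem_nhds.2 ?_⟩
  exact Filter.mem_of_superset (closedBall_mem_nhds 0 one_pos) <|
    closedBall_subset_of_extremePoints_subset (Submodule.convex _)
      (Submodule.closed_of_finiteDimensional _) Submodule.subset_span

lemma opNorm_le_of_forall_extremePoints {A : X →L[ℝ] Y} {C : ℝ} (hC : 0 ≤ C)
    (hA : ∀ x ∈ extremePoints ℝ (closedBall (0 : X) 1), ‖A x‖ ≤ C) : ‖A‖ ≤ C := by
  have hball : closedBall (0 : X) 1 ⊆ A ⁻¹' closedBall 0 C :=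
    closedBall_subset_of_extremePoints_subset
      ((convex_closedBall _ _).linear_preimage A.toLinearMap)
      (isClosed_closedBall.preimage A.continuous) fun x hx => by simpa using hA x hx
  refine ContinuousLinearMap.opNorm_le_of_unit_norm hC fun x hx => ?_
  simpa using hball (mem_closedBall_zero_iff.2 hx.le)

variable (X Y) in
/-- Restriction of operators to the extreme points of the unit ball, as an isometric embedding of
`L(X, Y)` into the `ℓ∞`-sum of copies of `Y` indexed by these points. -/
noncomputable def restrictExtremePoints [Fintype (extremePoints ℝ (closedBall (0 : X) 1))] :
    (X →L[ℝ] Y) →ₗᵢ[ℝ] (extremePoints ℝ (closedBall (0 : X) 1) → Y) where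
  toFun A x := A x
  map_add' _ _ := rfl
  map_smul' _ _ := rfl
  norm_map' A := by
    refine le_antisymm ?_ ?_
    · exact (pi_norm_le_iff_of_nonneg (norm_nonneg A)).2 fun x =>
        A.unit_le_opNorm x (norm_le_one_of_mem_extremePoints_closedBall x.2)
    · exact opNorm_le_of_forall_extremePoints (norm_nonneg _) fun x hx =>
        norm_le_pi_norm (fun x : extremePoints ℝ (closedBall (0 : X) 1) => A x) ⟨x, hx⟩

end ExtremePoints

section SpanOfSupportingFunctionals

variable {X Y : Type*} [NormedAddCommGroup X] [NormedSpace ℝ X] [NormedAddCommGroup Y]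
  [NormedSpace ℝ Y]

variable (X Y) in
/-- The elementary tensor `f ⊗ x`, viewed as the functional `A ↦ f (A x)` on `L(X, Y)`; it is
bilinear in `f` and `x`. -/
noncomputable def tensorFunctional :
    (Y →L[ℝ] ℝ) →ₗ[ℝ] X →ₗ[ℝ] ((X →L[ℝ] Y) →L[ℝ] ℝ) :=
  LinearMap.mk₂ ℝ (fun f x => f.comp (ContinuousLinearMap.apply ℝ Y x))
    (fun _ _ _ => rfl) (fun _ _ _ => rfl)
    (fun f x x' => by ext A; simp) (fun c f x => by ext A; simp)

@[simp]
lemma tensorFunctional_apply (f : Y →L[ℝ] ℝ) (x : X) (A : X →L[ℝ] Y) :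
    tensorFunctional X Y f x A = f (A x) := rfl

lemma tensorFunctional_mem_suppFunctionals {T : X →L[ℝ] Y} (hT : ‖T‖ ≤ 1) {x : X}
    (hx : ‖x‖ ≤ 1) {f : Y →L[ℝ] ℝ} (hf : f ∈ suppFunctionals (T x)) :
    tensorFunctional X Y f x ∈ suppFunctionals T := by
  refine comp_mem_suppFunctionals (A := ContinuousLinearMap.apply ℝ Y x) ?_ hT hf
  refine ContinuousLinearMap.opNorm_le_bound _ zero_le_one fun A => ?_
  rw [one_mul]
  exact A.unit_le_opNorm x hx

theorem span_suppFunctionals_eq_iSup [FiniteDimensional ℝ X]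
    (hfin : (extremePoints ℝ (closedBall (0 : X) 1)).Finite) {T : X →L[ℝ] Y} (hT : ‖T‖ ≤ 1) :
    Submodule.span ℝ (suppFunctionals T) =
      ⨆ x ∈ extremePoints ℝ (closedBall (0 : X) 1),
        (Submodule.span ℝ (suppFunctionals (T x))).map ((tensorFunctional X Y).flip x) := by
  classical
  refine le_antisymm (Submodule.span_le.2 fun Φ hΦ => ?_) (iSup₂_le fun x hx => ?_)
  · have := hfin.fintype
    set R := restrictExtremePoints X Y
    obtain ⟨G, hG, rfl⟩ := exists_mem_suppFunctionals_comp_eq R hΦ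
    let f := fun x => G.comp (ContinuousLinearMap.single ℝ (fun _ => Y) x)
    have hsum : G.comp R.toContinuousLinearMap = ∑ x, tensorFunctional X Y (f x) x := by
      ext A
      calc G (R A) = G (∑ x, Pi.single x (R A x)) := by rw [Finset.univ_sum_single]
        _ = (∑ x, tensorFunctional X Y (f x) x) A := by
          rw [map_sum, _root_.sum_apply]; rfl
    rw [hsum]
    refine Submodule.sum_mem _ fun x _ => Submodule.mem_iSup_of_mem (x : X) <|
      Submodule.mem_iSup_of_mem x.2 <|
        Submodule.mem_map_of_mem (f := (tensorFunctional X Y).flip (x : X)) ?_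
    exact mem_span_suppFunctionals_of_apply_eq_norm <|
      apply_single_eq_norm_of_mem_suppFunctionals ((R.norm_map T).trans_le hT) hG x
  · exact (Submodule.map_span_le _ _ _).2 fun f hf => Submodule.subset_span <|
      tensorFunctional_mem_suppFunctionals hT (norm_le_one_of_mem_extremePoints_closedBall hx) hf

lemma iSup_map_flip_eq_map_span_sup_map_span {R M N P : Type*} [CommSemiring R] [AddCommMonoid M]
    [AddCommMonoid N] [AddCommMonoid P] [Module R M] [Module R N] [Module R P]
    (B : M →ₗ[R] N →ₗ[R] P) {g h : M} (hgh : Submodule.span R {g, h} = ⊤) {s t : Set N}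
    (hst : s ⊆ t) {p : N → Submodule R M} (hs : ∀ x ∈ s, p x = ⊤)
    (ht : ∀ x ∈ t \ s, p x = Submodule.span R {g}) :
    ⨆ x ∈ t, (p x).map (B.flip x) =
      (Submodule.span R t).map (B g) ⊔ (Submodule.span R s).map (B h) := by
  have hg : ∀ x ∈ t, B g x ∈ (Submodule.span R t).map (B g) := fun x hx =>
    Submodule.mem_map_of_mem (Submodule.subset_span hx)
  have hh : ∀ x ∈ s, B h x ∈ (Submodule.span R s).map (B h) := fun x hx =>
    Submodule.mem_map_of_mem (Submodule.subset_span hx)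
  have hmem : ∀ x ∈ t, ∀ f ∈ p x, B f x ∈ ⨆ x ∈ t, (p x).map (B.flip x) := fun x hx f hf =>
    Submodule.mem_iSup_of_mem x <| Submodule.mem_iSup_of_mem hx <|
      Submodule.mem_map_of_mem (f := B.flip x) hf
  refine le_antisymm (iSup₂_le fun x hx => ?_) (sup_le ?_ ?_)
  · by_cases hxs : x ∈ s
    · rw [hs x hxs, ← hgh, Submodule.map_span_le]
      rintro f (rfl | rfl)
      exacts [Submodule.mem_sup_left (hg x hx), Submodule.mem_sup_right (hh x hxs)]
    · rw [ht x ⟨hx, hxs⟩, Submodule.map_span_le]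
      rintro f rfl
      exact Submodule.mem_sup_left (hg x hx)
  · refine (Submodule.map_span_le _ _ _).2 fun x hx => hmem x hx g ?_
    by_cases hxs : x ∈ s
    · simp [hs x hxs]
    · simp [ht x ⟨hx, hxs⟩]
  · exact (Submodule.map_span_le _ _ _).2 fun x hx => hmem x (hst hx) h (by simp [hs x hx])

lemma tensorFunctional_coprod_injective {g h : Y →L[ℝ] ℝ} (hgh : LinearIndependent ℝ ![g, h]) :
    Function.Injective ((tensorFunctional X Y g).coprod (tensorFunctional X Y h)) := by
  rw [injective_iff_map_eq_zero]
  rintro ⟨x, w⟩ hxw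
  have hdual : ∀ φ : X →L[ℝ] ℝ, φ x = 0 ∧ φ w = 0 := fun φ => by
    refine LinearIndependent.pair_iff.1 hgh _ _ (ContinuousLinearMap.ext fun y => ?_)
    simpa using DFunLike.congr_fun hxw (φ.smulRight y)
  exact Prod.ext (SeparatingDual.eq_zero_of_forall_dual_eq_zero (R := ℝ) fun φ => (hdual φ).1)
    (SeparatingDual.eq_zero_of_forall_dual_eq_zero (R := ℝ) fun φ => (hdual φ).2)

lemma finrank_map_sup_map {K E F G : Type*} [DivisionRing K] [AddCommGroup E] [Module K E]
    [AddCommGroup F] [Module K F] [AddCommMonoid G] [Module K G] {a : E →ₗ[K] G} {b : F →ₗ[K] G}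
    (hab : Function.Injective (a.coprod b)) (V : Submodule K E) (W : Submodule K F)
    [FiniteDimensional K V] [FiniteDimensional K W] :
    finrank K ↥(V.map a ⊔ W.map b) = finrank K V + finrank K W := by
  rw [← LinearMap.range_domRestrict, ← LinearMap.range_domRestrict, ← LinearMap.range_coprod,
    ← finrank_prod]
  exact LinearMap.finrank_range_of_inj <|
    hab.comp (V.injective_subtype.prodMap W.injective_subtype)

theorem finrank_span_suppFunctionals [FiniteDimensional ℝ X] (hY : finrank ℝ Y = 2)
    (hfin : (extremePoints ℝ (closedBall (0 : X) 1)).Finite) {T : X →L[ℝ] Y}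
    (hT : ∀ x ∈ extremePoints ℝ (closedBall (0 : X) 1), ‖T x‖ = 1) {g : Y →L[ℝ] ℝ} (hg : g ≠ 0)
    (hsmooth : ∀ x ∈ extremePoints ℝ (closedBall (0 : X) 1), IsSmoothPoint (T x) →
      Submodule.span ℝ (suppFunctionals (T x)) = Submodule.span ℝ {g}) :
    finrank ℝ (Submodule.span ℝ (suppFunctionals T)) = finrank ℝ X + finrank ℝ (Submodule.span ℝ
      {x ∈ extremePoints ℝ (closedBall (0 : X) 1) | ¬ IsSmoothPoint (T x)}) := by
  have : FiniteDimensional ℝ Y := finite_of_finrank_eq_succ hY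
  have hdual : finrank ℝ (Y →L[ℝ] ℝ) = 2 := finrank_continuousDual.trans hY
  obtain ⟨h, hgh⟩ := exists_linearIndependent_pair_of_one_lt_finrank (R := ℝ) (by omega) hg
  have hspan : Submodule.span ℝ {g, h} = ⊤ := by
    rw [← Matrix.range_cons_cons_empty g h ![]]
    exact hgh.span_eq_top_of_card_eq_finrank (by simp [hdual])
  have hT1 : ‖T‖ ≤ 1 := opNorm_le_of_forall_extremePoints zero_le_one fun x hx => (hT x hx).le
  rw [span_suppFunctionals_eq_iSup hfin hT1,
    iSup_map_flip_eq_map_span_sup_map_span (tensorFunctional X Y) hspan (Set.sep_subset _ _)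
      (fun x hx => span_suppFunctionals_eq_top_of_not_isSmoothPoint hY (hT x hx.1) hx.2)
      (fun x hx => hsmooth x hx.1 (not_not.1 fun hns => hx.2 ⟨hx.1, hns⟩)),
    finrank_map_sup_map (tensorFunctional_coprod_injective hgh), span_extremePoints_closedBall,
    finrank_top]

end SpanOfSupportingFunctionals

section Coordinates

lemma ker_eq_ker_of_le_of_surjective {K V W U : Type*} [DivisionRing K] [AddCommGroup V]
    [Module K V] [AddCommGroup W] [Module K W] [AddCommGroup U] [Module K U]
    [FiniteDimensional K V] [FiniteDimensional K W] {f : V →ₗ[K] W} {p : V →ₗ[K] U}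
    (hle : LinearMap.ker f ≤ LinearMap.ker p) (hp : Function.Surjective p)
    (hWU : finrank K W ≤ finrank K U) : LinearMap.ker f = LinearMap.ker p := by
  refine Submodule.eq_of_le_of_finrank_le hle ?_
  have hf := f.finrank_range_add_finrank_ker
  have hp' := p.finrank_range_add_finrank_ker
  have hrange : finrank K (LinearMap.range f) ≤ finrank K W := Submodule.finrank_le _
  rw [LinearMap.range_eq_top.2 hp, finrank_top] at hp'
  omega

variable {K ι V : Type*} [Field K] [AddCommGroup V] [Module K V]

/-- The coordinate `i` factors through the linear map `T`, i.e. `x i` is a linear function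
of `T x`; encoded as an inclusion of kernels. -/
def CoordFactorsThrough (T : (ι → K) →ₗ[K] V) (i : ι) : Prop :=
  LinearMap.ker T ≤ LinearMap.ker (LinearMap.proj (R := K) (φ := fun _ : ι => K) i)

lemma exists_mem_ker_forall_ne_zero [Infinite K] [Finite ι] (T : (ι → K) →ₗ[K] V) :
    ∃ c ∈ LinearMap.ker T, ∀ i, ¬ CoordFactorsThrough T i → c i ≠ 0 := by
  obtain ⟨c, hc, hne⟩ := Module.Dual.exists_forall_mem_ne_zero_of_forall_exists
    (LinearMap.ker T)
    (fun i : {i // ¬ CoordFactorsThrough T i} => LinearMap.proj (R := K) (φ := fun _ => K) i.1)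
    fun i => SetLike.not_le_iff_exists.1 i.2
  exact ⟨c, hc, fun i hi => hne ⟨i, hi⟩⟩

lemma map_eq_of_coordFactorsThrough_pair [Finite ι] [FiniteDimensional K V]
    (hV : finrank K V ≤ 2) {T : (ι → K) →ₗ[K] V} {i j : ι} (hij : i ≠ j)
    (hi : CoordFactorsThrough T i) (hj : CoordFactorsThrough T j) {x y : ι → K}
    (hxi : x i = y i) (hxj : x j = y j) : T x = T y := by
  classical
  let p : (ι → K) →ₗ[K] K × K := (LinearMap.proj i).prod (LinearMap.proj j)
  have hp : Function.Surjective p := fun ⟨a, b⟩ =>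
    ⟨Pi.single i a + Pi.single j b, by simp [p, hij, hij.symm]⟩
  have hker : LinearMap.ker T = LinearMap.ker p :=
    ker_eq_ker_of_le_of_surjective (by rw [LinearMap.ker_prod]; exact le_inf hi hj) hp
      (by simpa using hV)
  rw [← LinearMap.sub_mem_ker_iff, hker, LinearMap.sub_mem_ker_iff]
  exact Prod.ext hxi hxj

lemma map_eq_or_eq_neg_of_mul_eq_mul [LinearOrder K] [IsStrictOrderedRing K]
    {T : (ι → K) →ₗ[K] V} {i j : ι}
    (hij : ∀ x y, x i = y i → x j = y j → T x = T y) {x y : ι → K} (hxi : x i ≠ 0)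
    (habs : |x i| = |y i|) (hmul : x i * x j = y i * y j) : T x = T y ∨ T x = -T y := by
  obtain h | h := abs_eq_abs.1 habs
  · exact .inl (hij x y h (mul_left_cancel₀ hxi (by rw [hmul, h])))
  · refine .inr (((hij x (-y) h) (mul_left_cancel₀ hxi ?_)).trans (map_neg T y))
    rw [hmul, h, Pi.neg_apply, neg_mul_neg]

end Coordinates

section Cube

variable {ι : Type*} [Fintype ι] {Y : Type*} [NormedAddCommGroup Y] [NormedSpace ℝ Y]

lemma mem_extremePoints_closedBall_pi_iff {x : ι → ℝ} :
    x ∈ extremePoints ℝ (closedBall (0 : ι → ℝ) 1) ↔ ∀ i, |x i| = 1 := by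
  rw [closedBall_pi _ zero_le_one, extremePoints_pi]
  simp [Real.closedBall_eq_Icc, Set.extremePoints_Icc, abs_eq, or_comm]

lemma finite_extremePoints_closedBall_pi :
    (extremePoints ℝ (closedBall (0 : ι → ℝ) 1)).Finite := by
  refine (Set.Finite.pi' fun _ : ι => Set.toFinite {1, -1}).subset fun x hx i => ?_
  exact eq_or_eq_neg_of_abs_eq (mem_extremePoints_closedBall_pi_iff.1 hx i)

lemma exists_mem_extremePoints_closedBall_pi_abs_mul (c : ι → ℝ) :
    ∃ z ∈ extremePoints ℝ (closedBall (0 : ι → ℝ) 1), ∀ i, |c i| * z i = c i := by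
  have hsign : ∀ i, ∃ s : ℝ, |s| = 1 ∧ |c i| * s = c i := fun i => by
    obtain h | h := abs_choice (c i)
    · exact ⟨1, by simp, by simp [h]⟩
    · exact ⟨-1, by simp, by simp [h]⟩
  choose z hz hcz using hsign
  exact ⟨z, mem_extremePoints_closedBall_pi_iff.2 hz, hcz⟩

lemma exists_mem_suppFunctionals_forall_apply_single_eq_zero [DecidableEq ι]
    {T : (ι → ℝ) →L[ℝ] Y}
    (hT : ∀ x ∈ extremePoints ℝ (closedBall (0 : ι → ℝ) 1), ‖T x‖ = 1) {c : ι → ℝ}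
    (hc : T c = 0) :
    ∃ z ∈ extremePoints ℝ (closedBall (0 : ι → ℝ) 1), ∃ h ∈ suppFunctionals (T z),
      ∀ i, c i ≠ 0 → h (T (Pi.single i 1)) = 0 := by
  obtain ⟨z, hz, hcz⟩ := exists_mem_extremePoints_closedBall_pi_abs_mul c
  obtain ⟨h, hh⟩ := suppFunctionals_nonempty (hT z hz)
  have hT1 : ‖T‖ ≤ 1 := opNorm_le_of_forall_extremePoints zero_le_one fun x hx => (hT x hx).le
  have hz1 : ‖z‖ ≤ 1 := norm_le_one_of_mem_extremePoints_closedBall hz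
  have hsingle : ∀ i (a : ℝ), h (T (Pi.single i a)) = a * h (T (Pi.single i 1)) := fun i a => by
    rw [← mul_one a, ← smul_eq_mul, Pi.single_smul, map_smul, map_smul]
    simp
  have hnonneg : ∀ i, 0 ≤ c i * h (T (Pi.single i 1)) := fun i => by
    have hzi : 0 ≤ h (T (Pi.single i (z i))) :=
      (norm_nonneg _).trans_eq (apply_single_eq_norm_of_mem_suppFunctionals hz1
        (comp_mem_suppFunctionals hT1 hz1 hh) i).symm
    rw [← hcz i, mul_assoc, ← hsingle]
    exact mul_nonneg (abs_nonneg _) hzi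
  have hsum : ∑ i, c i * h (T (Pi.single i 1)) = 0 := by
    calc ∑ i, c i * h (T (Pi.single i 1)) = h (T (∑ i, Pi.single i (c i))) := by
          simp only [map_sum, ← hsingle]
      _ = 0 := by rw [Finset.univ_sum_single, hc, map_zero]
  exact ⟨z, hz, h, hh, fun i hi => (mul_eq_zero.1 ((Finset.sum_eq_zero_iff_of_nonneg
    fun i _ => hnonneg i).1 hsum i (Finset.mem_univ i))).resolve_left hi⟩

theorem exists_norming_or_determined_by_two_coords (hY : finrank ℝ Y = 2)
    {T : (ι → ℝ) →L[ℝ] Y}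
    (hT : ∀ x ∈ extremePoints ℝ (closedBall (0 : ι → ℝ) 1), ‖T x‖ = 1) :
    (∃ g : Y →L[ℝ] ℝ, ‖g‖ = 1 ∧
      ∀ x ∈ extremePoints ℝ (closedBall (0 : ι → ℝ) 1), |g (T x)| = 1) ∨
    ∃ i j, ∀ x y, x i = y i → x j = y j → T x = T y := by
  classical
  have : FiniteDimensional ℝ Y := finite_of_finrank_eq_succ hY
  obtain ⟨c, hc, hc_ne⟩ := exists_mem_ker_forall_ne_zero T.toLinearMap
  obtain ⟨z, hz, h, hh, hzero⟩ := exists_mem_suppFunctionals_forall_apply_single_eq_zero hT hc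
  have hexpand : ∀ x, h (T x) = ∑ i, x i * h (T (Pi.single i 1)) := fun x => by
    conv_lhs => rw [pi_eq_sum_univ' x]
    simp only [map_sum, map_smul, smul_eq_mul]
  obtain ⟨j, -, hj⟩ : ∃ j ∈ Finset.univ, z j * h (T (Pi.single j 1)) ≠ 0 :=
    Finset.exists_ne_zero_of_sum_ne_zero (by rw [← hexpand, hh.2]; exact one_ne_zero)
  have hfactor : ∀ i, h (T (Pi.single i 1)) ≠ 0 → CoordFactorsThrough T.toLinearMap i :=
    fun i hi => not_not.1 fun hi' => hi (hzero i (hc_ne i hi'))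
  by_cases hunique : ∀ i, h (T (Pi.single i 1)) ≠ 0 → i = j
  · have hcoord : ∀ x, h (T x) = x j * h (T (Pi.single j 1)) := fun x => by
      rw [hexpand, Finset.sum_eq_single_of_mem j (Finset.mem_univ j)]
      intro i _ hij
      rw [not_not.1 fun hi => hij (hunique i hi), mul_zero]
    have habs : ∀ x ∈ extremePoints ℝ (closedBall (0 : ι → ℝ) 1),
        |h (T x)| = |h (T (Pi.single j 1))| := fun x hx => by
      rw [hcoord, abs_mul, mem_extremePoints_closedBall_pi_iff.1 hx j, one_mul]
    refine .inl ⟨h, hh.1, fun x hx => ?_⟩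
    rw [habs x hx, ← habs z hz, hh.2, abs_one]
  · push Not at hunique
    obtain ⟨i, hi, hij⟩ := hunique
    exact .inr ⟨i, j, fun x y => map_eq_of_coordFactorsThrough_pair hY.le hij (hfactor i hi)
      (hfactor j (right_ne_zero_of_mul hj))⟩

theorem exists_span_suppFunctionals_eq_of_isSmoothPoint (hY : finrank ℝ Y = 2)
    {T : (ι → ℝ) →L[ℝ] Y}
    (hT : ∀ x ∈ extremePoints ℝ (closedBall (0 : ι → ℝ) 1), ‖T x‖ = 1)
    (hns : ∃ w ∈ extremePoints ℝ (closedBall (0 : ι → ℝ) 1), ¬ IsSmoothPoint (T w)) :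
    ∃ g : Y →L[ℝ] ℝ, g ≠ 0 ∧ ∀ x ∈ extremePoints ℝ (closedBall (0 : ι → ℝ) 1),
      IsSmoothPoint (T x) →
        Submodule.span ℝ (suppFunctionals (T x)) = Submodule.span ℝ {g} := by
  have habs : ∀ x ∈ extremePoints ℝ (closedBall (0 : ι → ℝ) 1), ∀ i, |x i| = 1 :=
    fun x hx => mem_extremePoints_closedBall_pi_iff.1 hx
  obtain ⟨g, hg, hgT⟩ | ⟨i, j, hij⟩ := exists_norming_or_determined_by_two_coords hY hT
  · exact ⟨g, norm_ne_zero_iff.1 (by simp [hg]), fun x hx hxs =>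
      hxs.span_suppFunctionals_eq hg (hgT x hx)⟩
  have hantipodal : ∀ x ∈ extremePoints ℝ (closedBall (0 : ι → ℝ) 1),
      ∀ y ∈ extremePoints ℝ (closedBall (0 : ι → ℝ) 1), x i * x j = y i * y j →
        T x = T y ∨ T x = -T y := fun x hx y hy =>
    map_eq_or_eq_neg_of_mul_eq_mul (T := T.toLinearMap) hij
      (abs_ne_zero.1 (by simp [habs x hx])) (by rw [habs x hx, habs y hy])
  obtain ⟨w, hw, hwns⟩ := hns
  have hsmooth_mul : ∀ x ∈ extremePoints ℝ (closedBall (0 : ι → ℝ) 1), IsSmoothPoint (T x) →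
      x i * x j = -(w i * w j) := by
    intro x hx hxs
    refine (abs_eq_abs.1 ?_).resolve_left fun hmul => hwns ?_
    · simp [abs_mul, habs x hx, habs w hw]
    · obtain h | h := hantipodal w hw x hx hmul.symm
      exacts [h ▸ hxs, h ▸ hxs.neg]
  by_cases hex : ∃ y ∈ extremePoints ℝ (closedBall (0 : ι → ℝ) 1), IsSmoothPoint (T y)
  · obtain ⟨y, hy, hys⟩ := hex
    obtain ⟨g, hg⟩ := suppFunctionals_nonempty (hT y hy)
    refine ⟨g, norm_ne_zero_iff.1 (by simp [hg.1]), fun x hx hxs => ?_⟩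
    rw [← hys.span_suppFunctionals_eq hg.1 (by simp [hg.2])]
    obtain h | h := hantipodal x hx y hy
      ((hsmooth_mul x hx hxs).trans (hsmooth_mul y hy hys).symm)
    · rw [h]
    · rw [h, span_suppFunctionals_neg]
  · obtain ⟨g, hg⟩ := suppFunctionals_nonempty (hT w hw)
    exact ⟨g, norm_ne_zero_iff.1 (by simp [hg.1]), fun x hx hxs => absurd ⟨x, hx, hxs⟩ hex⟩

end Cube

theorem stmt_8 {n k : ℕ} {Y : Type*} [NormedAddCommGroup Y] [NormedSpace ℝ Y]
    [FiniteDimensional ℝ Y] (hY : finrank ℝ Y = 2)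
    (T : (Fin n → ℝ) →L[ℝ] Y) (hT : ‖T‖ = 1)
    (hMT : extremePoints ℝ (closedBall (0 : Fin n → ℝ) 1) ⊆
      {x ∈ sphere (0 : Fin n → ℝ) 1 | ‖T x‖ = ‖T‖})
    (S : Set (Fin n → ℝ))
    (hS : S = {x ∈ extremePoints ℝ (closedBall (0 : Fin n → ℝ) 1) |
      ¬ IsSmoothPoint (T x)})
    (hSne : S.Nonempty)
    (hk : finrank ℝ (Submodule.span ℝ S) = k) :
    finrank ℝ (Submodule.span ℝ (suppFunctionals T)) = n + k := by
  subst hS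
  have hTx : ∀ x ∈ extremePoints ℝ (closedBall (0 : Fin n → ℝ) 1), ‖T x‖ = 1 :=
    fun x hx => (hMT hx).2.trans hT
  obtain ⟨g, hg, hsmooth⟩ := exists_span_suppFunctionals_eq_of_isSmoothPoint hY hTx hSne
  rw [finrank_span_suppFunctionals hY finite_extremePoints_closedBall_pi hTx hg hsmooth, hk,
    finrank_fin_fun]
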